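/- arXiv:2502.13799 — 3 statements merged into one kernel-verified Lean document; each statement's English description precedes it below -/
import Mathlib

section
/- Under the assumptions on b below, for every δ ∈ (0,1) and every z ∈ ℝ one has ((|z|−1)₊)² ≤ 2^{m+1} δ^m B^* Φ_δ(z), where (s)₊ = max(s,0) denotes the positive part and Φ_δ(z) = ∫₀^z ∫₀^s 1/b_δ(τ) dτ ds. -/
lemma aux_pos (f : ℝ → ℝ) (hf : Continuous f) (h0 : ∀ x, 0 ≤ f x) (c : ℝ)
    (hc : ∀ x, 1 ≤ x → c ≤ f x) (z : ℝ) (hz : 0 ≤ z) :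
    c / 2 * max (z - 1) 0 ^ 2 ≤ ∫ s in (0 : ℝ)..z, ∫ τ in (0 : ℝ)..s, f τ := by
  have hF : Continuous (fun s : ℝ => ∫ τ in (0 : ℝ)..s, f τ) :=
    intervalIntegral.continuous_primitive (fun a b => hf.intervalIntegrable a b) 0
  have hF0 : ∀ s : ℝ, 0 ≤ s → 0 ≤ ∫ τ in (0 : ℝ)..s, f τ := fun s hs =>
    intervalIntegral.integral_nonneg hs (fun u _ => h0 u)
  rcases le_total z 1 with h1 | h1
  · rw [max_eq_right (by linarith)]
    have : 0 ≤ ∫ s in (0 : ℝ)..z, ∫ τ in (0 : ℝ)..s, f τ :=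
      intervalIntegral.integral_nonneg hz (fun u hu => hF0 u hu.1)
    simpa using this
  · rw [max_eq_left (by linarith)]
    have hF1 : ∀ s ∈ Set.Icc 1 z, c * (s - 1) ≤ ∫ τ in (0 : ℝ)..s, f τ := by
      intro s hs
      rw [← intervalIntegral.integral_add_adjacent_intervals
        (hf.intervalIntegrable 0 1) (hf.intervalIntegrable 1 s)]
      have h2 : ∫ τ in (1 : ℝ)..s, c ≤ ∫ τ in (1 : ℝ)..s, f τ :=
        intervalIntegral.integral_mono_on hs.1 (by simp) (hf.intervalIntegrable 1 s)
          (fun x hx => hc x hx.1)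
      rw [intervalIntegral.integral_const, smul_eq_mul] at h2
      have := hF0 1 (by norm_num)
      linarith
    rw [← intervalIntegral.integral_add_adjacent_intervals
        (hF.intervalIntegrable 0 1) (hF.intervalIntegrable 1 z)]
    have h3 : ∫ s in (1 : ℝ)..z, c * (s - 1) ≤ ∫ s in (1 : ℝ)..z, ∫ τ in (0 : ℝ)..s, f τ :=
      intervalIntegral.integral_mono_on h1
        (Continuous.intervalIntegrable (by fun_prop) _ _) (hF.intervalIntegrable 1 z) hF1
    have h4 : ∫ s in (1 : ℝ)..z, c * (s - 1) = c / 2 * (z - 1) ^ 2 := by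
      rw [intervalIntegral.integral_const_mul, intervalIntegral.integral_sub (by simp) (by simp)]
      simp
      ring
    have h5 : 0 ≤ ∫ s in (0 : ℝ)..1, ∫ τ in (0 : ℝ)..s, f τ :=
      intervalIntegral.integral_nonneg (by norm_num) (fun u hu => hF0 u hu.1)
    linarith

lemma aux_neg (f : ℝ → ℝ) (z : ℝ) :
    ∫ s in (0 : ℝ)..z, ∫ τ in (0 : ℝ)..s, f τ
      = ∫ s in (0 : ℝ)..(-z), ∫ τ in (0 : ℝ)..s, f (-τ) := by
  have h : ∀ s : ℝ, ∫ τ in (0 : ℝ)..s, f (-τ) = - ∫ τ in (0 : ℝ)..(-s), f τ := by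
    intro s
    rw [intervalIntegral.integral_comp_neg, neg_zero, intervalIntegral.integral_symm]
  simp_rw [h]
  rw [intervalIntegral.integral_neg,
    intervalIntegral.integral_comp_neg (fun s => ∫ τ in (0 : ℝ)..s, f τ), neg_zero, neg_neg,
    intervalIntegral.integral_symm]

lemma aux_all (f : ℝ → ℝ) (hf : Continuous f) (h0 : ∀ x, 0 ≤ f x) (c : ℝ)
    (hc : ∀ x, 1 ≤ |x| → c ≤ f x) (z : ℝ) :
    c / 2 * max (|z| - 1) 0 ^ 2 ≤ ∫ s in (0 : ℝ)..z, ∫ τ in (0 : ℝ)..s, f τ := by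
  rcases le_total 0 z with h | h
  · rw [abs_of_nonneg h]
    exact aux_pos f hf h0 c (fun x hx => hc x (hx.trans (le_abs_self x))) z h
  · rw [abs_of_nonpos h, aux_neg]
    exact aux_pos (fun x => f (-x)) (by fun_prop) (fun x => h0 _) c
      (fun x hx => hc _ (by rw [abs_neg]; exact hx.trans (le_abs_self x))) (-z) (by linarith)

/-- For every `δ ∈ (0,1)` and every `z ∈ ℝ`, the approximate entropy function
`Φ_δ(z) = ∫₀^z ∫₀^s 1/b_δ(τ) dτ ds` controls the deviation from the physical interval `[−1,1]`:
`((|z|−1)₊)² ≤ 2^{m+1} δ^m B^* Φ_δ(z)`. -/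
theorem entropy_controls_deviation
    (m : ℝ) (hm : 1 ≤ m)
    (B : ℝ → ℝ) (Blo Bhi : ℝ)
    (hB : ContDiffOn ℝ 1 B (Set.Icc (-1) 1))
    (hBlo : 0 < Blo)
    (hBbound : ∀ r ∈ Set.Icc (-1 : ℝ) 1, Blo ≤ B r ∧ B r ≤ Bhi)
    (b : ℝ → ℝ)
    (hb : ∀ r : ℝ, b r = if r ∈ Set.Icc (-1 : ℝ) 1 then (1 - r ^ 2) ^ m * B r else 0)
    (δ : ℝ) (hδ : δ ∈ Set.Ioo (0 : ℝ) 1)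
    (bδ : ℝ → ℝ)
    (hbδ : ∀ r : ℝ, bδ r =
      if r ≤ -1 + δ then b (-1 + δ)
      else if 1 - δ ≤ r then b (1 - δ)
      else b r)
    (Φδ : ℝ → ℝ)
    (hΦδ : ∀ r : ℝ, Φδ r = ∫ s in (0 : ℝ)..r, ∫ τ in (0 : ℝ)..s, 1 / bδ τ)
    (z : ℝ) :
    max (|z| - 1) 0 ^ 2 ≤ (2 : ℝ) ^ (m + 1) * δ ^ m * Bhi * Φδ z := by
  obtain ⟨hδ0, hδ1⟩ := hδ
  have hBhi : 0 < Bhi := by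
    have := hBbound 0 (by constructor <;> norm_num)
    linarith
  have hb' : ∀ r ∈ Set.Icc (-1 : ℝ) 1, b r = (1 - r ^ 2) ^ m * B r := fun r hr => by
    rw [hb, if_pos hr]
  have hbc : ContinuousOn b (Set.Icc (-1 : ℝ) 1) := by
    refine ContinuousOn.congr ?_ hb'
    refine ContinuousOn.mul ?_ hB.continuousOn
    exact ContinuousOn.rpow_const (by fun_prop) (fun x _ => Or.inr (by linarith))
  have key : ∃ P : ℝ → ℝ, Continuous P ∧ (∀ r, -1 < P r ∧ P r < 1) ∧ (∀ r, bδ r = b (P r)) ∧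
      (∀ r, 1 ≤ |r| → 1 - P r ^ 2 ≤ 2 * δ) := by
    refine ⟨fun r => max (-1 + δ) (min r (1 - δ)), by fun_prop, fun r => ⟨?_, ?_⟩, ?_, ?_⟩
    · exact lt_of_lt_of_le (by linarith) (le_max_left _ _)
    · exact max_lt (by linarith) (lt_of_le_of_lt (min_le_right _ _) (by linarith))
    · intro r
      rw [hbδ]
      beta_reduce
      split_ifs with h1 h2
      · rw [max_eq_left ((min_le_left _ _).trans h1)]
      · rw [min_eq_right h2, max_eq_right (by linarith)]
      · rw [min_eq_left (by linarith), max_eq_right (by linarith)]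
    · intro r hr
      rcases le_abs.1 hr with h | h
      · have : max (-1 + δ) (min r (1 - δ)) = 1 - δ := by
          rw [min_eq_right (by linarith), max_eq_right (by linarith)]
        simp only [this]
        nlinarith
      · have : max (-1 + δ) (min r (1 - δ)) = -1 + δ :=
          max_eq_left ((min_le_left _ _).trans (by linarith))
        simp only [this]
        nlinarith
  obtain ⟨P, hPc, hP1, hPb, hP2⟩ := key
  have hIcc : ∀ r, P r ∈ Set.Icc (-1 : ℝ) 1 := fun r => ⟨(hP1 r).1.le, (hP1 r).2.le⟩
  have hbase : ∀ r, 0 < 1 - P r ^ 2 := fun r => by nlinarith [hP1 r]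
  have hpos : ∀ r, 0 < bδ r := fun r => by
    rw [hPb, hb' _ (hIcc r)]
    exact mul_pos (Real.rpow_pos_of_pos (hbase r) m)
      (lt_of_lt_of_le hBlo (hBbound _ (hIcc r)).1)
  have hcont : Continuous bδ := by
    have : bδ = fun r => b (P r) := funext hPb
    rw [this]
    exact hbc.comp_continuous hPc hIcc
  have hC : 0 < (2 * δ) ^ m * Bhi := mul_pos (Real.rpow_pos_of_pos (by linarith) m) hBhi
  have main := aux_all (fun τ => 1 / bδ τ)
    (continuous_const.div hcont (fun r => (hpos r).ne')) (fun r => (one_div_pos.2 (hpos r)).le)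
    (1 / ((2 * δ) ^ m * Bhi)) (fun r hr => by
      apply one_div_le_one_div_of_le (hpos r)
      rw [hPb, hb' _ (hIcc r)]
      exact mul_le_mul (Real.rpow_le_rpow (hbase r).le (hP2 r hr) (by linarith))
        (hBbound _ (hIcc r)).2 (hBlo.le.trans (hBbound _ (hIcc r)).1)
        (Real.rpow_pos_of_pos (by linarith) m).le) z
  rw [← hΦδ] at main
  have e : (2 : ℝ) ^ (m + 1) * δ ^ m * Bhi = 2 * ((2 * δ) ^ m * Bhi) := by
    rw [Real.rpow_add (by norm_num), Real.rpow_one, Real.mul_rpow (by norm_num) hδ0.le]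
    ring
  rw [e]
  generalize (2 * δ) ^ m * Bhi = C at *
  calc max (|z| - 1) 0 ^ 2 = 2 * C * (1 / C / 2 * max (|z| - 1) 0 ^ 2) := by
        field_simp
    _ ≤ _ := mul_le_mul_of_nonneg_left main (by linarith)
end

section
/- Let d ≥ 1 and let A : ℝ^d → ℝ be continuously differentiable with |A'(p)| ≤ A₂|p| for all p ∈ ℝ^d (A₂ ≥ 0) and with A' strongly monotone, i.e. (A'(p) − A'(q))·(p − q) ≥ c_A|p − q|² for all p, q ∈ ℝ^d and some c_A > 0, where A' = ∇A. Let G : ℝ^d → ℝ^d be measurable, Q-periodic, and square-integrable over Q. Then for every h ≠ 0 and every j ∈ {1,…,d}, c_A ∫_Q |G(x+h e_j) − G(x)|² dx ≤ −∫_Q A'(G(x))·(G(x+h e_j) − 2G(x) + G(x−h e_j)) dx. -/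
open MeasureTheory
open scoped RealInnerProductSpace

section Aux

variable {d : ℕ}

/-- The open cylinder over the cross-section of the box, invariant in direction `j`. -/
def cyl (a c : Fin d → ℝ) (j : Fin d) : Set (EuclideanSpace ℝ (Fin d)) :=
  {x | ∀ i, i ≠ j → x i ∈ Set.Ioo (a i) (c i)}

/-- A slab in direction `j`. -/
def slab (j : Fin d) (s t : ℝ) : Set (EuclideanSpace ℝ (Fin d)) := {x | x j ∈ Set.Ioc s t}

lemma measurable_cyl (a c : Fin d → ℝ) (j : Fin d) : MeasurableSet (cyl a c j) := by
  have : cyl a c j = ⋂ i, ⋂ (_ : i ≠ j), {x | x i ∈ Set.Ioo (a i) (c i)} := by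
    ext x; simp [cyl]
  rw [this]
  refine MeasurableSet.iInter fun i => MeasurableSet.iInter fun _ => ?_
  exact measurableSet_Ioo.preimage (by fun_prop : Measurable fun x : EuclideanSpace ℝ (Fin d) => x i)

lemma measurable_slab (j : Fin d) (s t : ℝ) : MeasurableSet (slab j s t) :=
  measurableSet_Ioc.preimage (by fun_prop : Measurable fun x : EuclideanSpace ℝ (Fin d) => x j)

lemma hyperplane_null (j : Fin d) (t : ℝ) :
    volume {x : EuclideanSpace ℝ (Fin d) | x j = t} = 0 := by
  have h1 := (PiLp.volume_preserving_ofLp (Fin d)).measure_preimage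
    (s := {f : Fin d → ℝ | f j = t})
    ((measurableSet_singleton t).preimage (measurable_pi_apply j)).nullMeasurableSet
  have h2 : volume {f : Fin d → ℝ | f j = t} = 0 := by
    exact Measure.pi_hyperplane (fun _ : Fin d => (volume : Measure ℝ)) j t
  rw [h2] at h1
  exact h1

lemma box_ae (a c : Fin d → ℝ) (j : Fin d) :
    {x : EuclideanSpace ℝ (Fin d) | ∀ i, x i ∈ Set.Ioo (a i) (c i)} =ᵐ[volume]
      (cyl a c j ∩ slab j (a j) (c j) : Set _) := by
  have h0 : ∀ᵐ x : EuclideanSpace ℝ (Fin d), x j ≠ c j := by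
    rw [ae_iff]; simpa using hyperplane_null j (c j)
  filter_upwards [h0] with x hx
  refine propext ⟨fun h => ⟨fun i _ => h i, Set.Ioo_subset_Ioc_self (h j)⟩, fun h i => ?_⟩
  by_cases hi : i = j
  · subst hi
    exact ⟨h.2.1, lt_of_le_of_ne h.2.2 hx⟩
  · exact h.1 i hi

lemma fund (j : Fin d) (T : ℝ) (hT : 0 < T) (s : ℝ) (μ : Measure (EuclideanSpace ℝ (Fin d))) :
    IsAddFundamentalDomain
      (AddSubgroup.zmultiples (T • EuclideanSpace.single j (1 : ℝ))) (slab j s (s + T)) μ := by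
  refine IsAddFundamentalDomain.mk' (measurable_slab j s _).nullMeasurableSet fun x => ?_
  obtain ⟨n, hn, hu⟩ := existsUnique_add_zsmul_mem_Ioc hT (x j) s
  refine ⟨⟨n • (T • EuclideanSpace.single j (1 : ℝ)), n, rfl⟩, ?_, ?_⟩
  · change (n • (T • EuclideanSpace.single j (1 : ℝ)) + x) j ∈ Set.Ioc s (s + T)
    simpa [add_comm] using hn
  · rintro ⟨_, m, rfl⟩ hm
    change (m • (T • EuclideanSpace.single j (1 : ℝ)) + x) j ∈ Set.Ioc s (s + T) at hm
    have := hu m (by simpa [add_comm] using hm)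
    subst this
    rfl

lemma cyl_inv (a c : Fin d → ℝ) (j : Fin d) (r : ℝ) :
    (fun x => r • EuclideanSpace.single j (1 : ℝ) + x) ⁻¹' (cyl a c j) = cyl a c j := by
  ext x
  simp only [cyl, Set.mem_preimage, Set.mem_ofPred_eq]
  refine forall_congr' fun i => forall_congr' fun hi => ?_
  simp [hi]

lemma shift (a c : Fin d → ℝ) (hac : ∀ i, a i < c i) (j : Fin d) (h : ℝ)
    (f : EuclideanSpace ℝ (Fin d) → ℝ)
    (hf : ∀ x, f (x + (c j - a j) • EuclideanSpace.single j (1 : ℝ)) = f x) :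
    (∫ x in {x : EuclideanSpace ℝ (Fin d) | ∀ i, x i ∈ Set.Ioo (a i) (c i)},
      f (x + h • EuclideanSpace.single j (1 : ℝ)) =
     ∫ x in {x : EuclideanSpace ℝ (Fin d) | ∀ i, x i ∈ Set.Ioo (a i) (c i)}, f x) ∧
    (IntegrableOn f {x : EuclideanSpace ℝ (Fin d) | ∀ i, x i ∈ Set.Ioo (a i) (c i)} →
     IntegrableOn (fun x => f (x + h • EuclideanSpace.single j (1 : ℝ)))
      {x : EuclideanSpace ℝ (Fin d) | ∀ i, x i ∈ Set.Ioo (a i) (c i)}) := by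
  set L := AddSubgroup.zmultiples ((c j - a j) • EuclideanSpace.single j (1 : ℝ)) with hL
  set μ := (volume : Measure (EuclideanSpace ℝ (Fin d))).restrict (cyl a c j) with hμ
  have hT : 0 < c j - a j := sub_pos.2 (hac j)
  have hvec : ∀ g : L, ∃ r : ℝ, (g : EuclideanSpace ℝ (Fin d)) =
      r • EuclideanSpace.single j (1 : ℝ) := by
    rintro ⟨_, n, rfl⟩
    exact ⟨n * (c j - a j), by simp only [mul_smul, Int.cast_smul_eq_zsmul]⟩
  have : VAddInvariantMeasure L (EuclideanSpace ℝ (Fin d)) μ := by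
    refine ⟨fun g s hs => ?_⟩
    obtain ⟨r, hr⟩ := hvec g
    change μ ((fun x => (g : EuclideanSpace ℝ (Fin d)) + x) ⁻¹' s) = μ s
    rw [hr, hμ, Measure.restrict_apply hs, Measure.restrict_apply (hs.preimage (by fun_prop))]
    conv_lhs => rw [← cyl_inv a c j r, ← Set.preimage_inter]
    exact measure_preimage_add _ _ _
  have hinv : ∀ (g : L) x, f (g +ᵥ x) = f x := by
    have hp : Function.Periodic f ((c j - a j) • EuclideanSpace.single j (1 : ℝ)) := hf
    rintro ⟨_, n, rfl⟩ x
    change f (n • _ + x) = f x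
    rw [add_comm]
    exact hp.zsmul n x
  have : Countable L := by
    have : Function.Surjective (fun n : ℤ => (⟨n • _, n, rfl⟩ : L)) := by
      rintro ⟨_, n, rfl⟩; exact ⟨n, rfl⟩
    exact this.countable
  have F0 := fund j (c j - a j) hT (a j) μ
  have F1 := fund j (c j - a j) hT (a j + h) μ
  have e0 : a j + (c j - a j) = c j := by ring
  have e1 : a j + h + (c j - a j) = c j + h := by ring
  rw [e0] at F0
  rw [e1] at F1
  have hr : ∀ s t, μ.restrict (slab j s t) = volume.restrict (cyl a c j ∩ slab j s t) := by
    intro s t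
    rw [hμ, Measure.restrict_restrict (measurable_slab j s t), Set.inter_comm]
  have hI := F1.setIntegral_eq F0 hinv
  have hJ := F1.integrableOn_iff F0 hinv
  rw [IntegrableOn, IntegrableOn] at hJ
  rw [hr, hr] at hI hJ
  have hpre : (fun x => x + h • EuclideanSpace.single j (1 : ℝ)) ⁻¹'
      (cyl a c j ∩ slab j (a j + h) (c j + h)) = cyl a c j ∩ slab j (a j) (c j) := by
    rw [Set.preimage_inter]
    congr 1
    · have := cyl_inv a c j h
      simpa only [add_comm] using this
    · ext x
      simp [slab]
  have mp := measurePreserving_add_right (volume : Measure (EuclideanSpace ℝ (Fin d)))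
    (h • EuclideanSpace.single j (1 : ℝ))
  have me := measurableEmbedding_addRight (h • EuclideanSpace.single j (1 : ℝ) :
    EuclideanSpace ℝ (Fin d))
  have hQ := box_ae a c j
  rw [IntegrableOn, IntegrableOn, Measure.restrict_congr_set hQ]
  constructor
  · rw [← hI, ← hpre]
    exact mp.setIntegral_preimage_emb me f _
  · intro hi
    have := (mp.integrableOn_comp_preimage me (f := f)).2 (hJ.2 hi)
    rw [hpre] at this
    exact this

end Aux

/-- Let `A : ℝ^d → ℝ` be `C¹` with linear growth and strongly monotone
gradient `A' = ∇A`, and let `G : ℝ^d → ℝ^d` be measurable, `Q`-periodic and square-integrable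
over the box `Q`. Then for every `h ≠ 0` and every coordinate direction `j`,
`c_A ∫_Q |G(x+h eⱼ) − G(x)|² dx ≤ −∫_Q A'(G(x))·(G(x+h eⱼ) − 2G(x) + G(x−h eⱼ)) dx`. -/
theorem periodic_difference_quotient_estimate
    (d : ℕ) (hd : 1 ≤ d)
    (A : EuclideanSpace ℝ (Fin d) → ℝ)
    (hA : ContDiff ℝ 1 A)
    (A₂ : ℝ) (hA₂ : 0 ≤ A₂)
    (hgrow : ∀ p : EuclideanSpace ℝ (Fin d), ‖gradient A p‖ ≤ A₂ * ‖p‖)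
    (cA : ℝ) (hcA : 0 < cA)
    (hmono : ∀ p q : EuclideanSpace ℝ (Fin d),
        cA * ‖p - q‖ ^ 2 ≤ ⟪gradient A p - gradient A q, p - q⟫)
    (a c : Fin d → ℝ) (hac : ∀ i, a i < c i)
    (Q : Set (EuclideanSpace ℝ (Fin d)))
    (hQ : Q = {x : EuclideanSpace ℝ (Fin d) | ∀ i, x i ∈ Set.Ioo (a i) (c i)})
    (G : EuclideanSpace ℝ (Fin d) → EuclideanSpace ℝ (Fin d))
    (hGmeas : Measurable G)
    (hGper : ∀ (x : EuclideanSpace ℝ (Fin d)) (i : Fin d),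
        G (x + (c i - a i) • EuclideanSpace.single i (1 : ℝ)) = G x)
    (hGL2 : IntegrableOn (fun x => ‖G x‖ ^ 2) Q volume)
    (h : ℝ) (hh : h ≠ 0) (j : Fin d) :
    cA * ∫ x in Q, ‖G (x + h • EuclideanSpace.single j (1 : ℝ)) - G x‖ ^ 2
      ≤ - ∫ x in Q,
          ⟪gradient A (G x),
            G (x + h • EuclideanSpace.single j (1 : ℝ)) - (2 : ℝ) • G x
              + G (x - h • EuclideanSpace.single j (1 : ℝ))⟫ := by
  set e : EuclideanSpace ℝ (Fin d) := h • EuclideanSpace.single j (1 : ℝ) with he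
  set F := gradient A with hF
  have hFc : Continuous F := by
    have h1 : Continuous (fderiv ℝ A) := hA.continuous_fderiv (by norm_num)
    exact (InnerProductSpace.toDual ℝ _).symm.continuous.comp h1
  have hFm : Measurable F := hFc.measurable
  have hper' : ∀ x v : EuclideanSpace ℝ (Fin d),
      G (x + (c j - a j) • EuclideanSpace.single j (1 : ℝ) + v) = G (x + v) := by
    intro x v
    rw [add_right_comm]
    exact hGper _ j
  have S := fun (h : ℝ) f hf => shift a c hac j h f hf
  rw [← hQ] at S
  -- shifted square integrability
  have hneg : ∀ x, x - e = x + (-h) • EuclideanSpace.single j (1 : ℝ) := by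
    intro x; rw [neg_smul, ← sub_eq_add_neg]
  have hp : IntegrableOn (fun x => ‖G (x + e)‖ ^ 2) Q :=
    (S h (fun x => ‖G x‖ ^ 2) (fun x => by simp only [hGper])).2 hGL2
  have hm : IntegrableOn (fun x => ‖G (x - e)‖ ^ 2) Q := by
    simp only [hneg]
    exact (S (-h) (fun x => ‖G x‖ ^ 2) (fun x => by simp only [hGper])).2 hGL2
  have hint : ∀ u v : EuclideanSpace ℝ (Fin d) → EuclideanSpace ℝ (Fin d), Measurable u →
      Measurable v → IntegrableOn (fun x => ‖u x‖ ^ 2) Q → IntegrableOn (fun x => ‖v x‖ ^ 2) Q →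
      IntegrableOn (fun x => ⟪F (u x), v x⟫) Q := by
    intro u v hu hv iu iv
    refine Integrable.mono' ((iu.add iv).const_mul A₂)
      ((hFm.comp hu).inner hv).aestronglyMeasurable (Filter.Eventually.of_forall fun x => ?_)
    have h1 := norm_inner_le_norm (𝕜 := ℝ) (F (u x)) (v x)
    have h2 := mul_le_mul_of_nonneg_right (hgrow (u x)) (norm_nonneg (v x))
    have h3 : ‖u x‖ * ‖v x‖ ≤ ‖u x‖ ^ 2 + ‖v x‖ ^ 2 := by
      nlinarith [sq_nonneg (‖u x‖ - ‖v x‖), sq_nonneg (‖u x‖), sq_nonneg ‖v x‖]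
    have h4 := mul_le_mul_of_nonneg_left h3 hA₂
    simp only [Pi.add_apply]
    linarith
  have mp : Measurable fun x => G (x + e) := hGmeas.comp (by fun_prop)
  have mm : Measurable fun x => G (x - e) := hGmeas.comp (by fun_prop)
  have i00 := hint _ _ hGmeas hGmeas hGL2 hGL2
  have i0p := hint _ _ hGmeas mp hGL2 hp
  have i0m := hint _ _ hGmeas mm hGL2 hm
  have ip0 := hint _ _ mp hGmeas hp hGL2
  have ipp := hint _ _ mp mp hp hp
  have s1 : ∫ x in Q, ⟪F (G (x + e)), G (x + e)⟫ = ∫ x in Q, ⟪F (G x), G x⟫ :=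
    (S h (fun x => ⟪F (G x), G x⟫) (fun x => by simp only [hGper])).1
  have s2 : ∫ x in Q, ⟪F (G (x + e)), G x⟫ = ∫ x in Q, ⟪F (G x), G (x - e)⟫ := by
    have := (S h (fun x => ⟪F (G x), G (x - e)⟫)
      (fun x => by simp only [hGper, sub_eq_add_neg _ e, hper'])).1
    simpa only [← he, add_sub_cancel_right] using this
  have key : cA * ∫ x in Q, ‖G (x + e) - G x‖ ^ 2 ≤
      ∫ x in Q, (⟪F (G (x + e)), G (x + e)⟫ - ⟪F (G (x + e)), G x⟫
        - (⟪F (G x), G (x + e)⟫ - ⟪F (G x), G x⟫)) := by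
    rw [← integral_const_mul]
    refine integral_mono_of_nonneg (Filter.Eventually.of_forall fun x => by positivity)
      ((ipp.sub ip0).sub (i0p.sub i00)) (Filter.Eventually.of_forall fun x => ?_)
    have := hmono (G (x + e)) (G x)
    simpa only [inner_sub_left, inner_sub_right, sub_sub_sub_comm] using this
  have e1 : ∫ x in Q, (⟪F (G (x + e)), G (x + e)⟫ - ⟪F (G (x + e)), G x⟫
        - (⟪F (G x), G (x + e)⟫ - ⟪F (G x), G x⟫)) =
      (∫ x in Q, ⟪F (G (x + e)), G (x + e)⟫) - (∫ x in Q, ⟪F (G (x + e)), G x⟫)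
        - ((∫ x in Q, ⟪F (G x), G (x + e)⟫) - ∫ x in Q, ⟪F (G x), G x⟫) := by
    exact (integral_sub (ipp.sub ip0) (i0p.sub i00)).trans
      (congrArg₂ (· - ·) (integral_sub ipp ip0) (integral_sub i0p i00))
  have e2 : ∫ x in Q, ⟪F (G x), G (x + e) - (2 : ℝ) • G x + G (x - e)⟫ =
      (∫ x in Q, ⟪F (G x), G (x + e)⟫) - 2 * (∫ x in Q, ⟪F (G x), G x⟫)
        + ∫ x in Q, ⟪F (G x), G (x - e)⟫ := by
    simp only [inner_add_right, inner_sub_right, inner_smul_right]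
    rw [← integral_const_mul]
    exact (integral_add (i0p.sub (i00.const_mul 2)) i0m).trans
      (congrArg (· + _) (integral_sub i0p (i00.const_mul 2)))
  rw [e2]
  rw [e1, s1, s2] at key
  linarith
end

section
/- Let d ≥ 1 and let A : ℝ^d → ℝ be continuously differentiable with |A'(p)| ≤ A₂|p| for all p ∈ ℝ^d (A₂ ≥ 0) and with A' strongly monotone, i.e. (A'(p) − A'(q))·(p − q) ≥ c_A|p − q|² for all p, q ∈ ℝ^d and some c_A > 0, where A' = ∇A. Let φ : ℝ^d → ℝ be twice continuously differentiable and Q-periodic, and let w : ℝ^d → ℝ be Q-periodic, square-integrable over Q, and satisfy the weak divergence identity ∫_Q w ξ dx = ∫_Q A'(∇φ)·∇ξ dx for every continuously differentiable Q-periodic function ξ : ℝ^d → ℝ (so that w = −div(A'(∇φ)) in the weak sense). Then c_A ∫_Q |D²φ(x)|² dx ≤ −∫_Q w(x) Δφ(x) dx, where |D²φ| denotes the Frobenius norm of the Hessian of φ and Δφ its Laplacian. -/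
open MeasureTheory
open scoped RealInnerProductSpace

/-- second-order mean value -/
theorem second_diff (f f1 f2 : ℝ → ℝ) (h0 : ∀ t, HasDerivAt f (f1 t) t)
    (h1 : ∀ t, HasDerivAt f1 (f2 t) t) (h : ℝ) (hh : 0 < h) :
    ∃ s, |s| ≤ h ∧ f h + f (-h) - 2 * f 0 = h ^ 2 * f2 s := by
  have hu : ∀ t, HasDerivAt (fun t => f t + f (-t)) (f1 t - f1 (-t)) t := by
    intro t
    have := (h0 t).add ((h0 (-t)).scomp t (hasDerivAt_neg t))
    refine this.congr_deriv ?_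
    simp [sub_eq_add_neg]
  have hsq : ∀ t : ℝ, HasDerivAt (fun t => t ^ 2) (2 * t) t := by
    intro t
    simpa using hasDerivAt_pow 2 t
  obtain ⟨t, ht, e⟩ := exists_ratio_hasDerivAt_eq_ratio_slope _ _ hh
    (fun x _ => (hu x).continuousAt.continuousWithinAt) (fun x _ => hu x) _ _
    (fun x _ => (hsq x).continuousAt.continuousWithinAt) (fun x _ => hsq x)
  obtain ⟨s, hs, e2⟩ := exists_hasDerivAt_eq_slope f1 f2 (a := -t) (b := t) (by linarith [ht.1])
    (fun x _ => (h1 x).continuousAt.continuousWithinAt) (fun x _ => h1 x)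
  refine ⟨s, abs_le.2 ⟨by linarith [hs.1, ht.2], by linarith [hs.2, ht.2]⟩, ?_⟩
  have ht0 : t ≠ 0 := ht.1.ne'
  rw [e2]
  simp at e
  have : t - -t ≠ 0 := by intro h; apply ht0; linarith
  field_simp
  nlinarith

def Strip {d : ℕ} (a c : Fin d → ℝ) (i : Fin d) (α β : ℝ) : Set (EuclideanSpace ℝ (Fin d)) :=
  {x | x i ∈ Set.Ico α β ∧ ∀ j, j ≠ i → x j ∈ Set.Ioo (a j) (c j)}

theorem strip_meas {d : ℕ} (a c : Fin d → ℝ) (i : Fin d) (α β : ℝ) :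
    MeasurableSet (Strip a c i α β) := by
  unfold Strip
  simp only [Set.ofPred_and, Set.ofPred_forall]
  refine MeasurableSet.inter ?_ (MeasurableSet.iInter fun j => MeasurableSet.iInter fun _ => ?_)
  · exact (EuclideanSpace.proj (𝕜 := ℝ) i).continuous.measurable measurableSet_Ico
  · exact (EuclideanSpace.proj (𝕜 := ℝ) j).continuous.measurable measurableSet_Ioo

theorem int_bdd {d : ℕ} {F : EuclideanSpace ℝ (Fin d) → ℝ} (hF : Continuous F)
    (S : Set (EuclideanSpace ℝ (Fin d))) (R : ℝ) (hS : ∀ x ∈ S, ∀ j, |x j| ≤ R) :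
    IntegrableOn F S := by
  have hb : S ⊆ Metric.closedBall 0 (√(∑ j : Fin d, R ^ 2)) := by
    intro x hx
    rw [mem_closedBall_zero_iff, EuclideanSpace.norm_eq]
    apply Real.sqrt_le_sqrt
    apply Finset.sum_le_sum
    intro j _
    exact pow_le_pow_left₀ (norm_nonneg _) (hS x hx j) 2
  exact (hF.continuousOn.integrableOn_compact (isCompact_closedBall _ _)).mono_set hb

theorem strip_int {d : ℕ} (a c : Fin d → ℝ) (i : Fin d) (α β : ℝ)
    {F : EuclideanSpace ℝ (Fin d) → ℝ} (hF : Continuous F) :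
    IntegrableOn F (Strip a c i α β) := by
  refine int_bdd hF _ (|α| + |β| + ∑ j, (|a j| + |c j|)) ?_
  intro x hx j
  have h1 : |a j| + |c j| ≤ ∑ j, (|a j| + |c j|) :=
    Finset.single_le_sum (f := fun j => |a j| + |c j|) (fun _ _ => by positivity) (Finset.mem_univ j)
  by_cases h : j = i
  · subst h
    have := hx.1
    have h3 : 0 ≤ ∑ j, (|a j| + |c j|) := by positivity
    exact abs_le.2 ⟨by linarith [this.1, neg_abs_le α, abs_nonneg β],
      by linarith [this.2, le_abs_self β, abs_nonneg α]⟩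
  · have := hx.2 j h
    exact abs_le.2 ⟨by linarith [this.1, neg_abs_le (a j), abs_nonneg β, abs_nonneg α, abs_nonneg (c j)],
      by linarith [this.2, le_abs_self (c j), abs_nonneg β, abs_nonneg α, abs_nonneg (a j)]⟩

theorem strip_add {d : ℕ} (a c : Fin d → ℝ) (i : Fin d) (α β γ : ℝ) (h1 : α ≤ β) (h2 : β ≤ γ)
    {F : EuclideanSpace ℝ (Fin d) → ℝ} (hF : Continuous F) :
    ∫ x in Strip a c i α γ, F x = (∫ x in Strip a c i α β, F x) + ∫ x in Strip a c i β γ, F x := by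
  rw [← setIntegral_union _ (strip_meas _ _ _ _ _) (strip_int _ _ _ _ _ hF) (strip_int _ _ _ _ _ hF)]
  · congr 2
    ext x
    simp only [Strip, Set.mem_union, Set.mem_ofPred_eq, ← or_and_right]
    rw [← Set.mem_union, Set.Ico_union_Ico_eq_Ico h1 h2]
  · rw [Set.disjoint_left]
    intro x hx hy
    exact absurd hx.1.2 (not_lt.2 hy.1.1)

theorem strip_shift {d : ℕ} (a c : Fin d → ℝ) (i : Fin d) (α β h : ℝ)
    (F : EuclideanSpace ℝ (Fin d) → ℝ) :
    ∫ x in Strip a c i α β, F (x + h • EuclideanSpace.single i (1 : ℝ)) =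
      ∫ x in Strip a c i (α + h) (β + h), F x := by
  rw [← (measurePreserving_add_right volume (h • EuclideanSpace.single i (1 : ℝ))).setIntegral_preimage_emb
    (MeasurableEquiv.addRight _).measurableEmbedding F (Strip a c i (α + h) (β + h))]
  congr 2
  ext x
  simp only [Strip, Set.mem_ofPred_eq, Set.mem_preimage]
  refine and_congr (by simp) (forall_congr' fun j => forall_congr' fun hj => ?_)
  simp [hj]

theorem Q_ae {d : ℕ} (a c : Fin d → ℝ) (i : Fin d) :
    ({x : EuclideanSpace ℝ (Fin d) | ∀ i, x i ∈ Set.Ioo (a i) (c i)} : Set _) =ᵐ[volume]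
      Strip a c i (a i) (c i) := by
  have hn : ∀ᵐ x : EuclideanSpace ℝ (Fin d), x i ≠ a i := by
    have := (PiLp.volume_preserving_ofLp (Fin d)).quasiMeasurePreserving.ae
      (p := fun f => f i ≠ a i) (by
        rw [ae_iff]
        simpa [volume_pi] using Measure.pi_hyperplane (fun _ : Fin d => (volume : Measure ℝ)) i (a i))
    exact this
  filter_upwards [hn] with x hx
  apply propext
  change (∀ i, x i ∈ Set.Ioo (a i) (c i)) ↔ (x i ∈ Set.Ico (a i) (c i) ∧ ∀ j, j ≠ i → x j ∈ Set.Ioo (a j) (c j))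
  constructor
  · intro h
    exact ⟨⟨(h i).1.le, (h i).2⟩, fun j _ => h j⟩
  · rintro ⟨h1, h2⟩ j
    by_cases hj : j = i
    · subst hj
      exact ⟨lt_of_le_of_ne h1.1 (Ne.symm hx), h1.2⟩
    · exact h2 j hj

theorem Q_shift {d : ℕ} (a c : Fin d → ℝ) (hac : ∀ i, a i < c i) (i : Fin d) (h : ℝ) (hh : 0 ≤ h)
    {F : EuclideanSpace ℝ (Fin d) → ℝ} (hF : Continuous F)
    (hper : ∀ x, F (x + (c i - a i) • EuclideanSpace.single i (1 : ℝ)) = F x) :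
    ∫ x in {x : EuclideanSpace ℝ (Fin d) | ∀ i, x i ∈ Set.Ioo (a i) (c i)},
      F (x + h • EuclideanSpace.single i (1 : ℝ)) =
    ∫ x in {x : EuclideanSpace ℝ (Fin d) | ∀ i, x i ∈ Set.Ioo (a i) (c i)}, F x := by
  rw [setIntegral_congr_set (Q_ae a c i), setIntegral_congr_set (Q_ae a c i), strip_shift]
  have e1 := strip_add a c i (a i) (a i + h) (c i + h) (by linarith) (by linarith [hac i]) hF
  have e2 := strip_add a c i (a i) (c i) (c i + h) (hac i).le (by linarith) hF
  have e3 := strip_shift a c i (a i) (a i + h) (c i - a i) F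
  simp only [hper] at e3
  rw [show a i + (c i - a i) = c i by ring, show a i + h + (c i - a i) = c i + h by ring] at e3
  linarith

theorem seq_dct {d : ℕ} (S : Set (EuclideanSpace ℝ (Fin d))) (hSm : MeasurableSet S) (R : ℝ)
    (hS : S ⊆ Metric.closedBall 0 R) (w : EuclideanSpace ℝ (Fin d) → ℝ) (hw : IntegrableOn w S)
    (K : EuclideanSpace ℝ (Fin d) → ℝ) (hK : Continuous K) (e : EuclideanSpace ℝ (Fin d))
    (f : ℕ → EuclideanSpace ℝ (Fin d) → ℝ) (hf : ∀ n, Continuous (f n))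
    (hs : ∀ (n : ℕ) x, ∃ s : ℝ, |s| ≤ 1 / ((n : ℝ) + 1) ∧ f n x = K (x + s • e)) :
    Filter.Tendsto (fun n => ∫ x in S, w x * f n x) Filter.atTop (nhds (∫ x in S, w x * K x)) := by
  choose s hs1 hs2 using hs
  have h1 : ∀ n x, |s n x| ≤ 1 := by
    intro n x
    refine (hs1 n x).trans ?_
    rw [div_le_one (by positivity)]
    linarith [(Nat.cast_nonneg n : (0 : ℝ) ≤ n)]
  obtain ⟨M, hM⟩ := (isCompact_closedBall (0 : EuclideanSpace ℝ (Fin d)) (R + ‖e‖)).exists_bound_of_continuousOn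
    hK.continuousOn
  refine tendsto_integral_of_dominated_convergence (fun x => ‖w x‖ * M) ?_ ?_ ?_ ?_
  · intro n
    exact hw.aestronglyMeasurable.mul (hf n).aestronglyMeasurable
  · exact hw.norm.mul_const M
  · intro n
    filter_upwards [ae_restrict_mem hSm] with x hx
    rw [norm_mul]
    refine mul_le_mul_of_nonneg_left ?_ (norm_nonneg _)
    rw [hs2]
    apply hM
    rw [mem_closedBall_zero_iff]
    have := mem_closedBall_zero_iff.1 (hS hx)
    refine (norm_add_le _ _).trans ?_
    rw [norm_smul]
    have : ‖s n x‖ * ‖e‖ ≤ 1 * ‖e‖ := mul_le_mul_of_nonneg_right (h1 n x) (norm_nonneg _)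
    linarith
  · refine Filter.Eventually.of_forall fun x => ?_
    refine Filter.Tendsto.const_mul _ ?_
    simp only [hs2]
    have hs0 : Filter.Tendsto (fun n => s n x) Filter.atTop (nhds 0) :=
      squeeze_zero_norm (fun n => hs1 n x) tendsto_one_div_add_atTop_nhds_zero_nat
    have : Filter.Tendsto (fun n => x + s n x • e) Filter.atTop (nhds (x + (0 : ℝ) • e)) :=
      (hs0.smul_const e).const_add x
    have := (hK.tendsto (x + (0 : ℝ) • e)).comp this
    simpa [Function.comp_def] using this

theorem line_deriv {d : ℕ} {ψ : EuclideanSpace ℝ (Fin d) → ℝ} (hψ : Differentiable ℝ ψ)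
    (x e : EuclideanSpace ℝ (Fin d)) (t : ℝ) :
    HasDerivAt (fun t : ℝ => ψ (x + t • e)) (fderiv ℝ ψ (x + t • e) e) t := by
  have h1 : HasDerivAt (fun t : ℝ => x + t • e) e t := by
    simpa using ((hasDerivAt_id t).smul_const e).const_add x
  exact (hψ (x + t • e)).hasFDerivAt.comp_hasDerivAt t h1

theorem grad_coord {d : ℕ} (φ : EuclideanSpace ℝ (Fin d) → ℝ) (x : EuclideanSpace ℝ (Fin d))
    (j : Fin d) : (gradient φ x) j = fderiv ℝ φ x (EuclideanSpace.single j (1 : ℝ)) := by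
  rw [← inner_gradient_left, EuclideanSpace.inner_single_right]
  simp

theorem grad_cont {d : ℕ} {φ : EuclideanSpace ℝ (Fin d) → ℝ} (hφ : ContDiff ℝ 1 φ) :
    Continuous (gradient φ) :=
  (InnerProductSpace.toDual ℝ _).symm.continuous.comp (hφ.continuous_fderiv (by norm_num))

theorem grad_per {d : ℕ} {φ : EuclideanSpace ℝ (Fin d) → ℝ} (v : EuclideanSpace ℝ (Fin d))
    (h : ∀ x, φ (x + v) = φ x) (x : EuclideanSpace ℝ (Fin d)) :
    gradient φ (x + v) = gradient φ x := by
  unfold gradient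
  rw [← fderiv_comp_add_right]
  simp only [h]

theorem key_ineq {d : ℕ} (A : EuclideanSpace ℝ (Fin d) → ℝ)
    (hA : ContDiff ℝ 1 A) (cA : ℝ)
    (hmono : ∀ p q : EuclideanSpace ℝ (Fin d),
        cA * ‖p - q‖ ^ 2 ≤ ⟪gradient A p - gradient A q, p - q⟫)
    (a c : Fin d → ℝ) (hac : ∀ i, a i < c i)
    (Q : Set (EuclideanSpace ℝ (Fin d)))
    (hQ : Q = {x : EuclideanSpace ℝ (Fin d) | ∀ i, x i ∈ Set.Ioo (a i) (c i)})
    (hint : ∀ F : EuclideanSpace ℝ (Fin d) → ℝ, Continuous F → IntegrableOn F Q)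
    (φ : EuclideanSpace ℝ (Fin d) → ℝ)
    (hφ : ContDiff ℝ 2 φ)
    (hφper : ∀ (x : EuclideanSpace ℝ (Fin d)) (i : Fin d),
        φ (x + (c i - a i) • EuclideanSpace.single i (1 : ℝ)) = φ x)
    (w : EuclideanSpace ℝ (Fin d) → ℝ)
    (hweak : ∀ ξ : EuclideanSpace ℝ (Fin d) → ℝ, ContDiff ℝ 1 ξ →
        (∀ (x : EuclideanSpace ℝ (Fin d)) (i : Fin d),
          ξ (x + (c i - a i) • EuclideanSpace.single i (1 : ℝ)) = ξ x) →
        ∫ x in Q, w x * ξ x = ∫ x in Q, ⟪gradient A (gradient φ x), gradient ξ x⟫)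
    (i : Fin d) (h : ℝ) (hh : 0 < h) :
    ∫ x in Q, w x * (φ (x + h • EuclideanSpace.single i (1 : ℝ))
        + φ (x + (-h) • EuclideanSpace.single i (1 : ℝ)) - 2 * φ x)
      ≤ - (cA * ∫ x in Q, ‖gradient φ (x + h • EuclideanSpace.single i (1 : ℝ))
          - gradient φ x‖ ^ 2) := by
  set v : EuclideanSpace ℝ (Fin d) := h • EuclideanSpace.single i (1 : ℝ) with hv
  have hv' : (-h) • EuclideanSpace.single i (1 : ℝ) = -v := by rw [hv, neg_smul]
  rw [hv']
  have hφ1 : ContDiff ℝ 1 φ := hφ.of_le (by norm_num)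
  have hφd : Differentiable ℝ φ := hφ1.differentiable (by norm_num)
  have hg : Continuous (gradient φ) := grad_cont hφ1
  have hG : Continuous (gradient A) := grad_cont hA
  rw [hweak (fun x => φ (x + v) + φ (x + -v) - 2 * φ x)]
  rotate_left
  · fun_prop
  · intro x k
    simp only [add_right_comm x _ v, add_right_comm x _ (-v), hφper]
  have hgr : ∀ x, gradient (fun x => φ (x + v) + φ (x + -v) - 2 * φ x) x
      = gradient φ (x + v) + gradient φ (x + -v) - (2 : ℝ) • gradient φ x := by
    intro x
    have hf : ∀ u, HasFDerivAt (fun x => φ (x + u)) (fderiv ℝ φ (x + u)) x := by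
      intro u
      rw [hasFDerivAt_comp_add_right]
      exact (hφd _).hasFDerivAt
    have : HasFDerivAt (fun x => φ (x + v) + φ (x + -v) - 2 * φ x)
        (fderiv ℝ φ (x + v) + fderiv ℝ φ (x + -v) - (2 : ℝ) • fderiv ℝ φ x) x :=
      ((hf v).add (hf (-v))).sub ((hφd x).hasFDerivAt.const_mul 2)
    unfold gradient
    rw [HasFDerivAt.fderiv this, map_sub, map_add, map_smul]
  simp only [hgr]
  set g := gradient φ with hgdef
  -- the shifted product
  let P : EuclideanSpace ℝ (Fin d) → ℝ := fun x => ⟪gradient A (g x), g x - g (x + -v)⟫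
  have hP : Continuous P := by fun_prop
  have hgper : ∀ x, g (x + (c i - a i) • EuclideanSpace.single i (1 : ℝ)) = g x :=
    grad_per _ fun x => hφper x i
  have hPs : ∫ x in Q, P (x + v) = ∫ x in Q, P x := by
    rw [hQ]
    refine Q_shift a c hac i h hh.le hP ?_
    intro x
    simp only [P, add_right_comm x _ (-v), hgper]
  have hPv : ∀ x, P (x + v) = ⟪gradient A (g (x + v)), g (x + v) - g x⟫ := by
    intro x
    simp only [P, add_neg_cancel_right]
  have e : ∫ x in Q, ⟪gradient A (g x), g (x + v) + g (x + -v) - (2 : ℝ) • g x⟫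
      = - ∫ x in Q, ⟪gradient A (g (x + v)) - gradient A (g x), g (x + v) - g x⟫ := by
    have e1 : ∀ x, ⟪gradient A (g x), g (x + v) + g (x + -v) - (2 : ℝ) • g x⟫
        = ⟪gradient A (g x), g (x + v) - g x⟫ - P x := by
      intro x
      simp only [P, inner_sub_right, inner_add_right, inner_smul_right]
      ring
    have e2 : ∀ x, ⟪gradient A (g (x + v)) - gradient A (g x), g (x + v) - g x⟫
        = P (x + v) - ⟪gradient A (g x), g (x + v) - g x⟫ := by
      intro x
      rw [hPv, inner_sub_left]
    simp only [e1, e2]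
    rw [integral_sub (hint _ (by fun_prop)) (hint _ hP),
      integral_sub (hint _ (by fun_prop)) (hint _ (by fun_prop)), hPs]
    ring
  rw [e, ← integral_const_mul]
  apply neg_le_neg
  refine integral_mono (hint _ (by fun_prop)) (hint _ (by fun_prop)) ?_
  intro x
  exact hmono _ _

/-- Let `A : ℝ^d → ℝ` be `C¹` with linear growth and strongly monotone
gradient `A' = ∇A`. Let `φ : ℝ^d → ℝ` be `C²` and `Q`-periodic, and let `w` be `Q`-periodic,
square-integrable over `Q`, with `∫_Q w ξ = ∫_Q A'(∇φ)·∇ξ` for every `C¹` `Q`-periodic `ξ`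
(so `w = −div(A'(∇φ))` weakly). Then
`c_A ∫_Q |D²φ|² ≤ −∫_Q w Δφ`,
where `|D²φ|` is the Frobenius norm of the Hessian and `Δφ` the Laplacian. -/
theorem anisotropic_H2_estimate
    (d : ℕ) (hd : 1 ≤ d)
    (A : EuclideanSpace ℝ (Fin d) → ℝ)
    (hA : ContDiff ℝ 1 A)
    (A₂ : ℝ) (hA₂ : 0 ≤ A₂)
    (hgrow : ∀ p : EuclideanSpace ℝ (Fin d), ‖gradient A p‖ ≤ A₂ * ‖p‖)
    (cA : ℝ) (hcA : 0 < cA)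
    (hmono : ∀ p q : EuclideanSpace ℝ (Fin d),
        cA * ‖p - q‖ ^ 2 ≤ ⟪gradient A p - gradient A q, p - q⟫)
    (a c : Fin d → ℝ) (hac : ∀ i, a i < c i)
    (Q : Set (EuclideanSpace ℝ (Fin d)))
    (hQ : Q = {x : EuclideanSpace ℝ (Fin d) | ∀ i, x i ∈ Set.Ioo (a i) (c i)})
    (φ : EuclideanSpace ℝ (Fin d) → ℝ)
    (hφ : ContDiff ℝ 2 φ)
    (hφper : ∀ (x : EuclideanSpace ℝ (Fin d)) (i : Fin d),
        φ (x + (c i - a i) • EuclideanSpace.single i (1 : ℝ)) = φ x)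
    (w : EuclideanSpace ℝ (Fin d) → ℝ)
    (hwmeas : Measurable w)
    (hwper : ∀ (x : EuclideanSpace ℝ (Fin d)) (i : Fin d),
        w (x + (c i - a i) • EuclideanSpace.single i (1 : ℝ)) = w x)
    (hwL2 : IntegrableOn (fun x => w x ^ 2) Q volume)
    (hweak : ∀ ξ : EuclideanSpace ℝ (Fin d) → ℝ, ContDiff ℝ 1 ξ →
        (∀ (x : EuclideanSpace ℝ (Fin d)) (i : Fin d),
          ξ (x + (c i - a i) • EuclideanSpace.single i (1 : ℝ)) = ξ x) →
        ∫ x in Q, w x * ξ x = ∫ x in Q, ⟪gradient A (gradient φ x), gradient ξ x⟫)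
    (D2 : Fin d → Fin d → EuclideanSpace ℝ (Fin d) → ℝ)
    (hD2 : ∀ (i j : Fin d) (x : EuclideanSpace ℝ (Fin d)),
        D2 i j x = fderiv ℝ (fun y => fderiv ℝ φ y (EuclideanSpace.single j (1 : ℝ))) x
          (EuclideanSpace.single i (1 : ℝ))) :
    cA * ∫ x in Q, ∑ i : Fin d, ∑ j : Fin d, (D2 i j x) ^ 2
      ≤ - ∫ x in Q, w x * ∑ i : Fin d, D2 i i x := by
  have hQm : MeasurableSet Q := by
    rw [hQ]
    simp only [Set.ofPred_forall]
    exact MeasurableSet.iInter fun j =>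
      (EuclideanSpace.proj (𝕜 := ℝ) j).continuous.measurable measurableSet_Ioo
  obtain ⟨R, hR⟩ : ∃ R, Q ⊆ Metric.closedBall 0 R := by
    refine ⟨√(∑ j : Fin d, (|a j| + |c j|) ^ 2), ?_⟩
    intro x hx
    rw [hQ] at hx
    rw [mem_closedBall_zero_iff, EuclideanSpace.norm_eq]
    apply Real.sqrt_le_sqrt
    apply Finset.sum_le_sum
    intro j _
    refine pow_le_pow_left₀ (norm_nonneg _) ?_ 2
    have hj := hx j
    exact abs_le.2 ⟨by linarith [hj.1, neg_abs_le (a j), abs_nonneg (c j)],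
      by linarith [hj.2, le_abs_self (c j), abs_nonneg (a j)]⟩
  have hint : ∀ F : EuclideanSpace ℝ (Fin d) → ℝ, Continuous F → IntegrableOn F Q := by
    intro F hF
    exact (hF.continuousOn.integrableOn_compact (isCompact_closedBall _ _)).mono_set hR
  have hfin : IsFiniteMeasure (volume.restrict Q) := by
    refine ⟨?_⟩
    rw [Measure.restrict_apply_univ]
    exact (measure_mono hR).trans_lt measure_closedBall_lt_top
  have hw : IntegrableOn w Q := by
    have : MemLp w 2 (volume.restrict Q) :=
      (memLp_two_iff_integrable_sq hwmeas.aestronglyMeasurable).2 hwL2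
    exact this.integrable (by norm_num)
  have hφ1 : ContDiff ℝ 1 φ := hφ.of_le (by norm_num)
  have hφd : Differentiable ℝ φ := hφ1.differentiable (by norm_num)
  have hp1 : ∀ j : Fin d, ContDiff ℝ 1
      (fun y => fderiv ℝ φ y (EuclideanSpace.single j (1 : ℝ))) := fun j =>
    (hφ.fderiv_right (m := 1) (by norm_num)).clm_apply contDiff_const
  have hpd : ∀ j : Fin d, Differentiable ℝ
      (fun y => fderiv ℝ φ y (EuclideanSpace.single j (1 : ℝ))) := fun j =>
    (hp1 j).differentiable (by norm_num)
  have hDc : ∀ i j, Continuous (D2 i j) := by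
    intro i j
    rw [show D2 i j = _ from funext (hD2 i j)]
    exact ((hp1 j).continuous_fderiv (by norm_num)).clm_apply continuous_const
  have hwD : ∀ i, IntegrableOn (fun x => w x * D2 i i x) Q := by
    intro i
    obtain ⟨M, hM⟩ := (isCompact_closedBall (0 : EuclideanSpace ℝ (Fin d)) R).exists_bound_of_continuousOn
      (hDc i i).continuousOn
    refine Integrable.mul_bdd (c := M) hw (hDc i i).aestronglyMeasurable ?_
    filter_upwards [ae_restrict_mem hQm] with x hx using hM x (hR hx)
  have main : ∀ i, ∫ x in Q, w x * D2 i i x ≤ - (cA * ∫ x in Q, ∑ j, (D2 i j x) ^ 2) := by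
    intro i
    set e : EuclideanSpace ℝ (Fin d) := EuclideanSpace.single i (1 : ℝ) with he
    let hn : ℕ → ℝ := fun n => 1 / ((n : ℝ) + 1)
    have hnpos : ∀ n, 0 < hn n := fun n => by simp only [hn]; positivity
    have T1 := seq_dct Q hQm R hR w hw (D2 i i) (hDc i i) e
      (fun n x => ((hn n) ^ 2)⁻¹ * (φ (x + hn n • e) + φ (x + (-hn n) • e) - 2 * φ x))
      (fun n => by have := hφd.continuous; fun_prop) (by
        intro n x
        obtain ⟨s, hs, es⟩ := second_diff (fun t => φ (x + t • e))
          (fun t => fderiv ℝ φ (x + t • e) e) (fun t => D2 i i (x + t • e))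
          (line_deriv hφd x e)
          (fun t => by rw [hD2]; exact line_deriv (hpd i) x e t) (hn n) (hnpos n)
        refine ⟨s, hs, ?_⟩
        simp only [zero_smul, add_zero] at es
        rw [es]
        have := (hnpos n).ne'
        field_simp)
    have T2 : ∀ j, Filter.Tendsto (fun n => ∫ x in Q, ((hn n) ^ 2)⁻¹ *
        (gradient φ (x + hn n • e) j - gradient φ x j) ^ 2) Filter.atTop
        (nhds (∫ x in Q, (D2 i j x) ^ 2)) := by
      intro j
      have hgc := grad_cont hφ1
      have := seq_dct Q hQm R hR (fun _ => 1) (hint _ continuous_const) (fun x => (D2 i j x) ^ 2)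
        ((hDc i j).pow 2) e (fun n x => ((hn n) ^ 2)⁻¹ *
          (gradient φ (x + hn n • e) j - gradient φ x j) ^ 2)
        (fun n => by fun_prop) (by
          intro n x
          have hl : ∀ t, HasDerivAt (fun t : ℝ => gradient φ (x + t • e) j)
              (D2 i j (x + t • e)) t := by
            intro t
            simp only [grad_coord, hD2]
            exact line_deriv (hpd j) x e t
          obtain ⟨s, hs, es⟩ := exists_hasDerivAt_eq_slope _ _ (hnpos n)
            (fun t _ => (hl t).continuousAt.continuousWithinAt) (fun t _ => hl t)
          refine ⟨s, abs_le.2 ⟨by linarith [hs.1, hnpos n], hs.2.le⟩, ?_⟩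
          simp only [zero_smul, add_zero, sub_zero] at es
          simp only [es]
          have := (hnpos n).ne'
          field_simp)
      simpa using this
    have T3 := (tendsto_finsetSum Finset.univ fun j _ => T2 j).const_mul cA
    have hsum : ∫ x in Q, ∑ j, (D2 i j x) ^ 2 = ∑ j, ∫ x in Q, (D2 i j x) ^ 2 :=
      integral_finsetSum _ fun j _ => hint _ ((hDc i j).pow 2)
    rw [hsum]
    refine le_of_tendsto_of_tendsto' T1 T3.neg ?_
    intro n
    have k := key_ineq A hA cA hmono a c hac Q hQ hint φ hφ hφper w hweak i (hn n) (hnpos n)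
    have hgc := grad_cont hφ1
    have e1 : ∫ x in Q, w x * (((hn n) ^ 2)⁻¹ *
          (φ (x + hn n • e) + φ (x + (-hn n) • e) - 2 * φ x))
        = ((hn n) ^ 2)⁻¹ * ∫ x in Q, w x * (φ (x + hn n • e) + φ (x + (-hn n) • e) - 2 * φ x) := by
      rw [← integral_const_mul]
      congr 1
      ext x
      ring
    have e2 : ∑ j, ∫ x in Q, ((hn n) ^ 2)⁻¹ * (gradient φ (x + hn n • e) j - gradient φ x j) ^ 2
        = ((hn n) ^ 2)⁻¹ * ∫ x in Q, ‖gradient φ (x + hn n • e) - gradient φ x‖ ^ 2 := by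
      simp only [EuclideanSpace.norm_sq_eq]
      rw [integral_finsetSum _ fun j _ => hint _ (by fun_prop), Finset.mul_sum]
      refine Finset.sum_congr rfl fun j _ => ?_
      rw [← integral_const_mul]
      simp
    rw [e1, e2]
    have := mul_le_mul_of_nonneg_left k (inv_nonneg.2 (sq_nonneg (hn n)))
    linarith
  have s1 : ∫ x in Q, ∑ i : Fin d, ∑ j : Fin d, (D2 i j x) ^ 2
      = ∑ i, ∫ x in Q, ∑ j : Fin d, (D2 i j x) ^ 2 :=
    integral_finsetSum _ fun i _ => hint _ (continuous_finsetSum _ fun j _ => (hDc i j).pow 2)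
  have s2 : ∫ x in Q, w x * ∑ i : Fin d, D2 i i x = ∑ i, ∫ x in Q, w x * D2 i i x := by
    simp only [Finset.mul_sum]
    exact integral_finsetSum _ fun i _ => hwD i
  rw [s1, s2, Finset.mul_sum, ← Finset.sum_neg_distrib]
  refine Finset.sum_le_sum fun i _ => ?_
  linarith [main i]
end
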